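/- For every real number β, there is no nonconstant C^∞ positive function f on an open interval that satisfies the Duffing equation f''(t) = -f(t)³ + β·f(t) together with B₁[f] = 0, B₃[f] = 0, and B₄[f] = 0 identically. (Consequently, the constant scalar curvature metrics g_m(R) on the Hirzebruch surfaces are never Bach flat.) -/

import Mathlib

/-!
The single equation `B₄ = 0` is already incompatible with the Duffing equation. Substituting
`f⁽²⁾ = -f³ + β f` and `f⁽³⁾ = (β - 3 f²) f⁽¹⁾` turns it into the first-order equation
`24 (f⁽¹⁾)² = 15 f⁴ + (2β - 32) f² + 11 - β²` (`sq_deriv_of_B4_eq_zero`). Differentiating this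
and using the Duffing equation again gives `108 f² = 44 β + 64` wherever `f⁽¹⁾ ≠ 0`
(`sq_eq_of_deriv_ne_zero`). A nonconstant `f` has `f⁽¹⁾ ≠ 0` on some open set, where `f²` is
therefore constant, so that `f f⁽¹⁾ = 0` there: a contradiction, as `f > 0`.
-/

open Real

/-- `ρ_i = f⁽ⁱ⁾/f`, the ratio of the `i`-th derivative of `f` to `f`. -/
noncomputable def rho (f : ℝ → ℝ) (i : ℕ) (t : ℝ) : ℝ := iteratedDeriv i f t / f t

/-- The component `B₁ = B₂` of the Bach tensor of the cohomogeneity-one metric `g(f)`. -/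
noncomputable def B1 (f : ℝ → ℝ) (t : ℝ) : ℝ :=
  (-(rho f 4 t) + rho f 1 t * rho f 3 t + 2 * (rho f 2 t) ^ 2 - (rho f 1 t) ^ 2 * rho f 2 t
    + 20 * (f t) ^ 2 * rho f 2 t + 20 * (f t) ^ 2 * (rho f 1 t) ^ 2
    - 48 * (f t) ^ 4 + 64 * (f t) ^ 2 - 11) / 6

/-- The component `B₂` of the Bach tensor of the cohomogeneity-one metric `g(f)`. -/
noncomputable def B2 (f : ℝ → ℝ) (t : ℝ) : ℝ :=
  (-(rho f 4 t) + rho f 1 t * rho f 3 t + 2 * (rho f 2 t) ^ 2 - (rho f 1 t) ^ 2 * rho f 2 t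
    + 20 * (f t) ^ 2 * rho f 2 t + 20 * (f t) ^ 2 * (rho f 1 t) ^ 2
    - 48 * (f t) ^ 4 + 64 * (f t) ^ 2 - 11) / 6

/-- The component `B₃` of the Bach tensor of the cohomogeneity-one metric `g(f)`. -/
noncomputable def B3 (f : ℝ → ℝ) (t : ℝ) : ℝ :=
  (2 * rho f 4 t - 4 * rho f 1 t * rho f 3 t - 3 * (rho f 2 t) ^ 2
    + 4 * (rho f 1 t) ^ 2 * rho f 2 t - 40 * (f t) ^ 2 * rho f 2 t
    - 20 * (f t) ^ 2 * (rho f 1 t) ^ 2 + 80 * (f t) ^ 4 - 96 * (f t) ^ 2 + 11) / 6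

/-- The component `B₄` of the Bach tensor of the cohomogeneity-one metric `g(f)`. -/
noncomputable def B4 (f : ℝ → ℝ) (t : ℝ) : ℝ :=
  (2 * rho f 1 t * rho f 3 t - (rho f 2 t) ^ 2 - 2 * (rho f 1 t) ^ 2 * rho f 2 t
    - 20 * (f t) ^ 2 * (rho f 1 t) ^ 2 + 16 * (f t) ^ 4 - 32 * (f t) ^ 2 + 11) / 6

/-- The Duffing equation eliminates the second and third derivatives from `B₄`, and `B₄ = 0`
becomes a first-order equation for `f`. -/
theorem sq_deriv_of_B4_eq_zero {β a b : ℝ} {f : ℝ → ℝ} (hf : Differentiable ℝ f)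
    (hpos : ∀ t ∈ Set.Ioo a b, 0 < f t)
    (hD : ∀ t ∈ Set.Ioo a b, deriv (deriv f) t = -(f t) ^ 3 + β * f t)
    {t : ℝ} (ht : t ∈ Set.Ioo a b) (hB : B4 f t = 0) :
    24 * (deriv f t) ^ 2 = 15 * (f t) ^ 4 + (2 * β - 32) * (f t) ^ 2 + 11 - β ^ 2 := by
  have h1 : iteratedDeriv 1 f t = deriv f t := by rw [iteratedDeriv_one]
  have h2' : iteratedDeriv 2 f = deriv (deriv f) := by
    rw [iteratedDeriv_succ, iteratedDeriv_one]
  have h2 : iteratedDeriv 2 f t = -(f t) ^ 3 + β * f t := by rw [h2', hD t ht]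
  have h3 : iteratedDeriv 3 f t = (β - 3 * (f t) ^ 2) * deriv f t := by
    rw [iteratedDeriv_succ, h2']
    have heq : deriv (deriv f) =ᶠ[nhds t] fun s => -(f s) ^ 3 + β * f s := by
      filter_upwards [isOpen_Ioo.mem_nhds ht] with s hs using hD s hs
    rw [heq.deriv_eq]
    have hd := (hf t).hasDerivAt
    have := ((hd.pow 3).neg.add (hd.const_mul β)).deriv
    refine Eq.trans this ?_
    push_cast
    ring
  have hne : f t ≠ 0 := (hpos t ht).ne'
  unfold B4 rho at hB
  rw [h1, h2, h3] at hB
  field_simp at hB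
  apply mul_left_cancel₀ (pow_ne_zero 2 hne)
  linarith

/-- Differentiating the first-order equation and comparing with the Duffing equation determines
`f²` at every point where the derivative of `f` does not vanish. -/
theorem sq_eq_of_deriv_ne_zero {β a b : ℝ} {f : ℝ → ℝ} (hf : Differentiable ℝ f)
    (hf' : Differentiable ℝ (deriv f))
    (hpos : ∀ t ∈ Set.Ioo a b, 0 < f t)
    (hD : ∀ t ∈ Set.Ioo a b, deriv (deriv f) t = -(f t) ^ 3 + β * f t)
    (hE : ∀ t ∈ Set.Ioo a b,
      24 * (deriv f t) ^ 2 = 15 * (f t) ^ 4 + (2 * β - 32) * (f t) ^ 2 + 11 - β ^ 2)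
    {t : ℝ} (ht : t ∈ Set.Ioo a b) (hne : deriv f t ≠ 0) :
    (f t) ^ 2 = (44 * β + 64) / 108 := by
  have hd := (hf t).hasDerivAt
  have hd' := (hf' t).hasDerivAt
  have hL := (hd'.pow 2).const_mul 24
  have hR := ((((hd.pow 4).const_mul 15).add ((hd.pow 2).const_mul (2 * β - 32))).add_const
    11).sub_const (β ^ 2)
  have heq := Filter.EventuallyEq.deriv_eq
    (Filter.eventually_of_mem (isOpen_Ioo.mem_nhds ht) hE)
  have key := hL.deriv.symm.trans (heq.trans hR.deriv)
  rw [hD t ht] at key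
  push_cast at key
  apply mul_left_cancel₀ (mul_ne_zero hne (hpos t ht).ne')
  linarith

/-- No nonconstant positive solution of the Duffing equation is Bach flat. -/
theorem duffing_never_bach_flat (β : ℝ) :
    ¬ ∃ (a b : ℝ) (f : ℝ → ℝ), a < b ∧ ContDiff ℝ (⊤ : ℕ∞) f ∧
        (∀ t ∈ Set.Ioo a b, 0 < f t) ∧
        (∃ s ∈ Set.Ioo a b, ∃ u ∈ Set.Ioo a b, f s ≠ f u) ∧
        (∀ t ∈ Set.Ioo a b, deriv (deriv f) t = -(f t) ^ 3 + β * f t) ∧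
        (∀ t ∈ Set.Ioo a b, B1 f t = 0 ∧ B3 f t = 0 ∧ B4 f t = 0) := by
  rintro ⟨a, b, f, -, hsm, hpos, ⟨s, hs, u, hu, hsu⟩, hD, hB⟩
  have hf : Differentiable ℝ f := hsm.differentiable (by simp)
  have hf' : Differentiable ℝ (deriv f) :=
    (contDiff_infty.mp hsm 2).differentiable_deriv_two
  have hE := fun t ht => sq_deriv_of_B4_eq_zero hf hpos hD ht (hB t ht).2.2
  obtain ⟨c, hc, hne⟩ : ∃ c ∈ Set.Ioo a b, deriv f c ≠ 0 := by
    by_contra! h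
    exact hsu (isOpen_Ioo.is_const_of_deriv_eq_zero isPreconnected_Ioo hf.differentiableOn
      h hs hu)
  have heq : (fun t => f t ^ 2) =ᶠ[nhds c] fun _ => (44 * β + 64) / 108 := by
    filter_upwards [isOpen_Ioo.mem_nhds hc, hf'.continuous.continuousAt.eventually_ne hne]
      with t ht hnet using sq_eq_of_deriv_ne_zero hf hf' hpos hD hE ht hnet
  have h0 := heq.deriv_eq
  rw [deriv_const] at h0
  have h1 := ((hf c).hasDerivAt.pow 2).deriv.symm.trans h0
  have hfc := (hpos c hc).ne'
  simp [hfc, hne] at h1
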